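/- Given a decomposition S = (A⊗B) ⊕ (A⊗B)^⊥, a channel E on L(S), a fixed density matrix σ_A on A, and a channel R such that R∘E(σ_A ⊗ σ_B) = σ_A ⊗ σ_B for all density matrices σ_B on B, there exists a unit vector |α⟩ ∈ A (any eigenvector of σ_A with nonzero eigenvalue) and a channel R_α such that R_α∘E(|α⟩⟨α| ⊗ σ_B) = |α⟩⟨α| ⊗ σ_B for all σ_B; i.e., the subspace |α⟩ ⊗ B is a correctable code for E of the same dimension as B. -/

import Mathlib

open Matrix Kronecker ComplexOrder

/-- A map on matrices is a quantum channel if it admits a trace-preserving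
Kraus decomposition. -/
def IsQChannel {n : ℕ}
    (Φ : Matrix (Fin n) (Fin n) ℂ → Matrix (Fin n) (Fin n) ℂ) : Prop :=
  ∃ (r : ℕ) (K : Fin r → Matrix (Fin n) (Fin n) ℂ),
    (∀ ρ, Φ ρ = ∑ i, K i * ρ * (K i)ᴴ) ∧ ∑ i, (K i)ᴴ * K i = 1

/-!
Follow `R` by the channel that resets the factor `A` to `|α⟩`. Composed with `E`, this gives a
positive trace-preserving map `F` that sends `σ_A ⊗ |ψ⟩⟨ψ|` to the pure state `|αψ⟩⟨αψ|`. Since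
`p |α⟩⟨α| ≤ σ_A` for some `p > 0`, positivity gives `p F(|αψ⟩⟨αψ|) ≤ |αψ⟩⟨αψ|`. A positive operator
below a pure state is a multiple of it, and the trace fixes the multiple, so `F` fixes `|αψ⟩⟨αψ|`.
Pure states span all operators on `B`, hence `F` fixes every `|α⟩⟨α| ⊗ σ_B`.
-/

open scoped MatrixOrder

section PureStates

variable {𝕜 n : Type*} [RCLike 𝕜] [Fintype n]

lemma trace_vecMulVec_star_of_unit {v : n → 𝕜} (hv : star v ⬝ᵥ v = 1) :
    (vecMulVec v (star v)).trace = 1 := by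
  rw [trace_vecMulVec, dotProduct_comm, hv]

lemma mulVec_eq_zero_of_le_vecMulVec {X : Matrix n n 𝕜} (hX : 0 ≤ X) {v w : n → 𝕜}
    (hXv : X ≤ vecMulVec v (star v)) (hw : star v ⬝ᵥ w = 0) : X *ᵥ w = 0 := by
  rw [nonneg_iff_posSemidef] at hX
  have hle : 0 ≤ star w ⬝ᵥ ((vecMulVec v (star v) - X) *ᵥ w) :=
    (le_iff.mp hXv).dotProduct_mulVec_nonneg w
  rw [sub_mulVec, vecMulVec_mulVec, hw, MulOpposite.op_zero, zero_smul, zero_sub,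
    dotProduct_neg, neg_nonneg] at hle
  exact (hX.dotProduct_mulVec_zero_iff w).mp (hle.antisymm (hX.dotProduct_mulVec_nonneg w))

lemma eq_trace_smul_of_le_vecMulVec {X : Matrix n n 𝕜} (hX : 0 ≤ X) {v : n → 𝕜}
    (hv : star v ⬝ᵥ v = 1) (hXv : X ≤ vecMulVec v (star v)) :
    X = X.trace • vecMulVec v (star v) := by
  classical
  set P := vecMulVec v (star v) with hP
  have right : X = X * P := by
    refine ext_of_mulVec_single fun i => ?_
    have hker : star v ⬝ᵥ ((1 - P) *ᵥ Pi.single i 1) = 0 := by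
      rw [dotProduct_mulVec, vecMul_sub, vecMul_one, hP, vecMul_vecMulVec, hv, one_smul,
        sub_self, zero_dotProduct]
    have hzero := mulVec_eq_zero_of_le_vecMulVec hX hXv hker
    rwa [mulVec_mulVec, Matrix.mul_sub, Matrix.mul_one, sub_mulVec, sub_eq_zero] at hzero
  have left : X = P * X := by
    have hPH : Pᴴ = P := by rw [hP, conjTranspose_vecMulVec, star_star]
    have hXH : Xᴴ = X := (nonneg_iff_posSemidef.mp hX).isHermitian
    simpa only [conjTranspose_mul, hPH, hXH] using congrArg conjTranspose right
  have scalar : X = (star v ⬝ᵥ (X *ᵥ v)) • P := by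
    conv_lhs => rw [left, right, hP, mul_vecMulVec, vecMulVec_mul_vecMulVec]
    rw [vecMulVec_smul]
  have htrace := congrArg trace scalar
  rw [trace_smul, hP, trace_vecMulVec_star_of_unit hv, smul_eq_mul, mul_one] at htrace
  rwa [htrace]

lemma star_eigenvectorBasis_dotProduct_self [DecidableEq n] {M : Matrix n n 𝕜}
    (hM : M.IsHermitian) (i : n) :
    star (hM.eigenvectorBasis i : n → 𝕜) ⬝ᵥ hM.eigenvectorBasis i = 1 := by
  rw [dotProduct_comm, ← EuclideanSpace.inner_eq_star_dotProduct]
  exact hM.eigenvectorBasis.inner_eq_one i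

lemma eq_sum_eigenvalues_smul_vecMulVec [DecidableEq n] {M : Matrix n n 𝕜}
    (hM : M.IsHermitian) :
    M = ∑ i, hM.eigenvalues i •
      vecMulVec (hM.eigenvectorBasis i) (star (hM.eigenvectorBasis i : n → 𝕜)) := by
  conv_lhs => rw [hM.spectral_theorem, Unitary.conjStarAlgAut_apply]
  ext i j
  rw [Matrix.mul_apply, Matrix.sum_apply]
  simp only [mul_diagonal, IsHermitian.eigenvectorUnitary_apply, star_apply,
    Matrix.smul_apply, vecMulVec_apply, Pi.star_apply, Function.comp_apply,
    RCLike.real_smul_eq_coe_mul]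
  exact Finset.sum_congr rfl fun k _ => by ring

lemma eigenvalues_smul_vecMulVec_le [DecidableEq n] {σ : Matrix n n 𝕜}
    (hσ : σ.PosSemidef) (i : n) :
    hσ.1.eigenvalues i •
      vecMulVec (hσ.1.eigenvectorBasis i) (star (hσ.1.eigenvectorBasis i : n → 𝕜)) ≤ σ := by
  conv_rhs => rw [eq_sum_eigenvalues_smul_vecMulVec hσ.1]
  refine Finset.single_le_sum (f := fun j => hσ.1.eigenvalues j •
    vecMulVec (hσ.1.eigenvectorBasis j) (star (hσ.1.eigenvectorBasis j : n → 𝕜)))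
    (fun j _ => ?_) (Finset.mem_univ i)
  exact smul_nonneg (hσ.eigenvalues_nonneg j)
    (nonneg_iff_posSemidef.mpr (posSemidef_vecMulVec_self_star _))

lemma exists_pos_smul_vecMulVec_le {σ : Matrix n n 𝕜} (hσ : σ.PosSemidef) (hne : σ ≠ 0) :
    ∃ α : n → 𝕜, star α ⬝ᵥ α = 1 ∧ ∃ p : ℝ, 0 < p ∧ p • vecMulVec α (star α) ≤ σ := by
  classical
  obtain ⟨i, hi⟩ := Function.ne_iff.mp (hσ.1.eigenvalues_eq_zero_iff.not.mpr hne)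
  exact ⟨_, star_eigenvectorBasis_dotProduct_self hσ.1 i, _,
    (hσ.eigenvalues_nonneg i).lt_of_ne' hi, eigenvalues_smul_vecMulVec_le hσ i⟩

lemma linearMap_eq_of_eq_on_pure_states {F : Type*} [AddCommMonoid F] [Module ℂ F]
    {f g : Matrix n n ℂ →ₗ[ℂ] F} (h : ∀ ψ : n → ℂ, star ψ ⬝ᵥ ψ = 1 →
      f (vecMulVec ψ (star ψ)) = g (vecMulVec ψ (star ψ))) : f = g := by
  classical
  refine LinearMap.ext_on (span_selfAdjoint (A := Matrix n n ℂ)) fun M (hM : M.IsHermitian) => ?_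
  rw [eq_sum_eigenvalues_smul_vecMulVec hM, map_sum, map_sum]
  refine Finset.sum_congr rfl fun i _ => ?_
  rw [RCLike.real_smul_eq_coe_smul (K := ℂ), map_smul, map_smul,
    h _ (star_eigenvectorBasis_dotProduct_self hM i)]

end PureStates

section PositiveMaps

variable {m n k : Type*} [Fintype k]

lemma mul_vecMulVec_star_mul_conjTranspose (V : Matrix n k ℂ) (ψ : k → ℂ) :
    V * vecMulVec ψ (star ψ) * Vᴴ = vecMulVec (V *ᵥ ψ) (star (V *ᵥ ψ)) := by
  rw [mul_vecMulVec, vecMulVec_mul, star_mulVec]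

/-- The positive map `X ↦ W X Wᴴ`; a channel is a sum of such maps. -/
noncomputable def conjMap [Finite n] (W : Matrix n k ℂ) : Matrix k k ℂ →ₚ[ℂ] Matrix n n ℂ :=
  .mk₀ (mulRightLinearMap n ℂ Wᴴ ∘ₗ mulLeftLinearMap k ℂ W) fun X hX => by
    rw [nonneg_iff_posSemidef] at hX ⊢
    exact hX.mul_mul_conjTranspose_same W

lemma conjMap_apply [Finite n] (W : Matrix n k ℂ) (X : Matrix k k ℂ) :
    conjMap W X = W * X * Wᴴ := rfl

variable [Fintype m] [Fintype n]

lemma star_mulVec_dotProduct_self_of_isometry [DecidableEq k] {V : Matrix n k ℂ}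
    (hV : Vᴴ * V = 1) {ψ : k → ℂ} (hψ : star ψ ⬝ᵥ ψ = 1) : star (V *ᵥ ψ) ⬝ᵥ (V *ᵥ ψ) = 1 := by
  rw [star_mulVec, ← dotProduct_mulVec, mulVec_mulVec, hV, one_mulVec, hψ]

lemma map_eq_vecMulVec_of_smul_le {Φ : Matrix m m ℂ →ₚ[ℂ] Matrix n n ℂ}
    (hΦ : ∀ ρ, (Φ ρ).trace = ρ.trace) {u : m → ℂ} {v : n → ℂ} (hu : star u ⬝ᵥ u = 1)
    (hv : star v ⬝ᵥ v = 1) {p : ℝ} (hp : 0 < p) {ρ : Matrix m m ℂ}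
    (hle : p • vecMulVec u (star u) ≤ ρ) (hρ : Φ ρ = vecMulVec v (star v)) :
    Φ (vecMulVec u (star u)) = vecMulVec v (star v) := by
  have hnonneg : 0 ≤ Φ (p • vecMulVec u (star u)) :=
    Φ.map_nonneg (smul_nonneg hp.le
      (nonneg_iff_posSemidef.mpr (posSemidef_vecMulVec_self_star u)))
  have hle' : Φ (p • vecMulVec u (star u)) ≤ vecMulVec v (star v) :=
    hρ ▸ OrderHomClass.mono Φ hle
  have hscaled : p • Φ (vecMulVec u (star u)) = p • vecMulVec v (star v) := by
    have h := eq_trace_smul_of_le_vecMulVec hnonneg hv hle'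
    rwa [hΦ, trace_smul, trace_vecMulVec_star_of_unit hu, smul_assoc, one_smul,
      Φ.map_smul_of_tower] at h
  exact smul_right_injective _ hp.ne' hscaled

lemma map_conj_isometry_eq [DecidableEq k] {Φ : Matrix m m ℂ →ₚ[ℂ] Matrix n n ℂ}
    (hΦ : ∀ ρ, (Φ ρ).trace = ρ.trace) {U : Matrix m k ℂ} {V : Matrix n k ℂ}
    (hU : Uᴴ * U = 1) (hV : Vᴴ * V = 1)
    (h : ∀ ψ : k → ℂ, star ψ ⬝ᵥ ψ = 1 → ∃ p : ℝ, 0 < p ∧ ∃ ρ,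
      p • (U * vecMulVec ψ (star ψ) * Uᴴ) ≤ ρ ∧ Φ ρ = V * vecMulVec ψ (star ψ) * Vᴴ)
    (σ : Matrix k k ℂ) : Φ (U * σ * Uᴴ) = V * σ * Vᴴ := by
  refine LinearMap.congr_fun (f := Φ.toLinearMap ∘ₗ (conjMap U).toLinearMap)
    (g := (conjMap V).toLinearMap) (linearMap_eq_of_eq_on_pure_states fun ψ hψ => ?_) σ
  obtain ⟨p, hp, ρ, hle, hρ⟩ := h ψ hψ
  change Φ (U * vecMulVec ψ (star ψ) * Uᴴ) = V * vecMulVec ψ (star ψ) * Vᴴ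
  rw [mul_vecMulVec_star_mul_conjTranspose] at hle hρ ⊢
  rw [mul_vecMulVec_star_mul_conjTranspose]
  exact map_eq_vecMulVec_of_smul_le hΦ (star_mulVec_dotProduct_self_of_isometry hU hψ)
    (star_mulVec_dotProduct_self_of_isometry hV hψ) hp hle hρ

end PositiveMaps

namespace IsQChannel

variable {n : ℕ} {Φ Ψ : Matrix (Fin n) (Fin n) ℂ → Matrix (Fin n) (Fin n) ℂ}

lemma of_fintype {ι : Type*} [Fintype ι] (K : ι → Matrix (Fin n) (Fin n) ℂ)
    (hK : ∑ i, (K i)ᴴ * K i = 1) : IsQChannel fun ρ => ∑ i, K i * ρ * (K i)ᴴ := by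
  let e := (Fintype.equivFin ι).symm
  refine ⟨Fintype.card ι, K ∘ e, fun ρ => ?_, ?_⟩
  · exact (e.sum_comp fun i => K i * ρ * (K i)ᴴ).symm
  · exact (e.sum_comp fun i => (K i)ᴴ * K i).trans hK

lemma comp (hΦ : IsQChannel Φ) (hΨ : IsQChannel Ψ) : IsQChannel (Φ ∘ Ψ) := by
  obtain ⟨r, K, hK, hK1⟩ := hΦ
  obtain ⟨t, L, hL, hL1⟩ := hΨ
  have hKL : ∑ x : Fin t × Fin r, (K x.2 * L x.1)ᴴ * (K x.2 * L x.1) = 1 := by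
    calc ∑ x : Fin t × Fin r, (K x.2 * L x.1)ᴴ * (K x.2 * L x.1)
        = ∑ i, (L i)ᴴ * (∑ j, (K j)ᴴ * K j) * L i := by
          simp only [Fintype.sum_prod_type, conjTranspose_mul, Matrix.mul_sum, Matrix.sum_mul,
            Matrix.mul_assoc]
      _ = 1 := by simp only [hK1, Matrix.mul_one, hL1]
  convert of_fintype (fun x : Fin t × Fin r => K x.2 * L x.1) hKL using 2 with ρ
  rw [Function.comp_apply, hK, hL, Fintype.sum_prod_type_right]
  simp only [Matrix.mul_sum, Matrix.sum_mul, Matrix.mul_assoc, conjTranspose_mul]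

lemma exists_positiveLinearMap (hΦ : IsQChannel Φ) :
    ∃ F : Matrix (Fin n) (Fin n) ℂ →ₚ[ℂ] Matrix (Fin n) (Fin n) ℂ,
      ⇑F = Φ ∧ ∀ ρ, (F ρ).trace = ρ.trace := by
  obtain ⟨r, K, hK, hK1⟩ := hΦ
  let L := ∑ i, (conjMap (K i)).toLinearMap
  have hL : ⇑L = Φ := by
    ext1 ρ
    simp only [L, LinearMap.sum_apply, PositiveLinearMap.coe_toLinearMap, conjMap_apply, hK]
  refine ⟨.mk₀ L fun ρ hρ => ?_, hL, fun ρ => ?_⟩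
  · rw [LinearMap.sum_apply]
    exact Finset.sum_nonneg fun i _ => (conjMap (K i)).map_nonneg hρ
  · change (L ρ).trace = ρ.trace
    calc (L ρ).trace = ∑ i, ((K i)ᴴ * K i * ρ).trace := by
          simp only [hL, hK, trace_sum, trace_mul_cycle (K _) ρ]
      _ = ρ.trace := by rw [← trace_sum, ← Matrix.sum_mul, hK1, Matrix.one_mul]

end IsQChannel

section TensorLeft

variable {R a : Type*} (b : Type*) [CommSemiring R] [StarRing R] [DecidableEq b]

/-- The matrix of `ψ ↦ α ⊗ ψ`, which embeds `b` as the factor `α ⊗ b` of the tensor product; the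
index type of `ψ` is explicit because `α` does not determine it. -/
def tensorLeft (α : a → R) : Matrix (a × b) b R :=
  of fun x j => α x.1 * (1 : Matrix b b R) x.2 j

variable {b} [Fintype b]

lemma tensorLeft_mul_mul_conjTranspose (α β : a → R) (σ : Matrix b b R) :
    tensorLeft b α * σ * (tensorLeft b β)ᴴ = vecMulVec α (star β) ⊗ₖ σ := by
  ext ⟨i, j⟩ ⟨k, l⟩
  simp [tensorLeft, Matrix.mul_apply, one_apply, vecMulVec_apply, apply_ite star, mul_right_comm]

variable [Fintype a]

lemma conjTranspose_tensorLeft_mul_kronecker_mul (α β : a → R) (τ : Matrix a a R)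
    (σ : Matrix b b R) :
    (tensorLeft b α)ᴴ * (τ ⊗ₖ σ) * tensorLeft b β = (star α ⬝ᵥ τ *ᵥ β) • σ := by
  ext j l
  simp only [tensorLeft, one_apply, mul_ite, mul_one, mul_zero, Matrix.mul_apply,
    conjTranspose_apply, of_apply, kroneckerMap_apply, Fintype.sum_prod_type, dotProduct,
    Pi.star_apply, mulVec, Matrix.smul_apply, smul_eq_mul, apply_ite star, star_zero, ite_mul,
    zero_mul, Finset.sum_ite_eq', Finset.mem_univ, if_true, Finset.sum_mul, Finset.mul_sum]
  rw [Finset.sum_comm]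
  exact Finset.sum_congr rfl fun i _ => Finset.sum_congr rfl fun k _ => by ring

lemma conjTranspose_tensorLeft_mul_self {α : a → R} (hα : star α ⬝ᵥ α = 1) :
    (tensorLeft b α)ᴴ * tensorLeft b α = 1 := by
  classical
  simpa [hα] using conjTranspose_tensorLeft_mul_kronecker_mul α α 1 (1 : Matrix b b R)

variable [DecidableEq a]

lemma sum_tensorLeft_single_mul_conjTranspose :
    ∑ i : a, tensorLeft b (Pi.single i (1 : R)) * (tensorLeft b (Pi.single i (1 : R)))ᴴ = 1 := by
  ext ⟨i, j⟩ ⟨k, l⟩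
  simp only [tensorLeft, Pi.single_apply, one_apply, mul_ite, mul_one, mul_zero,
    Matrix.sum_apply, Matrix.mul_apply, of_apply, conjTranspose_apply, apply_ite star, star_one,
    star_zero, Finset.sum_ite_eq, Finset.mem_univ, if_true, Prod.mk.injEq]
  rw [← ite_and]
  grind

lemma sum_conjTranspose_tensorLeft_single_mul_kronecker_mul (τ : Matrix a a R)
    (σ : Matrix b b R) :
    ∑ i : a, (tensorLeft b (Pi.single i (1 : R)))ᴴ * (τ ⊗ₖ σ) * tensorLeft b (Pi.single i (1 : R))
      = τ.trace • σ := by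
  simp [conjTranspose_tensorLeft_mul_kronecker_mul, ← Finset.sum_smul, trace]

end TensorLeft

lemma exists_reset_channel {s : ℕ} {a b : Type*} [Fintype a] [Fintype b] [DecidableEq a]
    [DecidableEq b] {W : Matrix (Fin s) (a × b) ℂ} {V : Matrix (Fin s) b ℂ} (hW : Wᴴ * W = 1)
    (hV : Vᴴ * V = 1) :
    ∃ T : Matrix (Fin s) (Fin s) ℂ → Matrix (Fin s) (Fin s) ℂ, IsQChannel T ∧
      ∀ (τ : Matrix a a ℂ) (σ : Matrix b b ℂ),
        T (W * (τ ⊗ₖ σ) * Wᴴ) = τ.trace • (V * σ * Vᴴ) := by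
  let J (i : a) : Matrix (a × b) b ℂ := tensorLeft b (Pi.single i 1)
  -- On the range of `W`, discard the factor `a` and embed by `V`; outside it, do nothing.
  let K (o : Option a) : Matrix (Fin s) (Fin s) ℂ :=
    o.elim (1 - W * Wᴴ) fun i => V * (J i)ᴴ * Wᴴ
  have hWW (X : Matrix (a × b) (Fin s) ℂ) : Wᴴ * (W * X) = X := by
    rw [← Matrix.mul_assoc, hW, Matrix.one_mul]
  have hVV (X : Matrix b (Fin s) ℂ) : Vᴴ * (V * X) = X := by
    rw [← Matrix.mul_assoc, hV, Matrix.one_mul]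
  have hnone : (K none)ᴴ * K none = 1 - W * Wᴴ := by
    simp [K, Matrix.mul_sub, Matrix.sub_mul, Matrix.mul_assoc, hWW]
  have hsome (i : a) : (K (some i))ᴴ * K (some i) = W * (J i * (J i)ᴴ) * Wᴴ := by
    simp [K, Matrix.mul_assoc, hVV]
  have hK : ∑ o, (K o)ᴴ * K o = 1 := by
    simp only [Fintype.sum_option, hnone, hsome]
    rw [← Matrix.sum_mul, ← Matrix.mul_sum, sum_tensorLeft_single_mul_conjTranspose,
      Matrix.mul_one, sub_add_cancel]
  refine ⟨_, .of_fintype K hK, fun τ σ => ?_⟩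
  have hnone_apply : K none * (W * (τ ⊗ₖ σ) * Wᴴ) * (K none)ᴴ = 0 := by
    simp [K, Matrix.sub_mul, Matrix.mul_assoc, hWW]
  have hsome_apply (i : a) : K (some i) * (W * (τ ⊗ₖ σ) * Wᴴ) * (K (some i))ᴴ
      = V * ((J i)ᴴ * (τ ⊗ₖ σ) * J i) * Vᴴ := by
    simp [K, Matrix.mul_assoc, hWW]
  simp only [Fintype.sum_option, hnone_apply, hsome_apply, zero_add]
  rw [← Matrix.sum_mul, ← Matrix.mul_sum,
    sum_conjTranspose_tensorLeft_single_mul_kronecker_mul, Matrix.mul_smul, Matrix.smul_mul]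

lemma conj_kronecker_mono {s a b : Type*} [Finite s] [Fintype a] [Fintype b]
    (W : Matrix s (a × b) ℂ) {X Y : Matrix a a ℂ} {Z : Matrix b b ℂ} (hXY : X ≤ Y)
    (hZ : Z.PosSemidef) : W * (X ⊗ₖ Z) * Wᴴ ≤ W * (Y ⊗ₖ Z) * Wᴴ := by
  have hkron : X ⊗ₖ Z ≤ Y ⊗ₖ Z := by
    have hsub : Y ⊗ₖ Z - X ⊗ₖ Z = (Y - X) ⊗ₖ Z := by
      ext
      simp only [Matrix.sub_apply, kroneckerMap_apply, sub_mul]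
    rw [le_iff, hsub]
    exact (le_iff.mp hXY).kronecker hZ
  exact OrderHomClass.mono (conjMap W) hkron

lemma exists_recovery_of_smul_vecMulVec_le {s : ℕ} {a b : Type*} [Fintype a] [Fintype b]
    [DecidableEq a] [DecidableEq b] {W : Matrix (Fin s) (a × b) ℂ} (hW : Wᴴ * W = 1)
    (E : Matrix (Fin s) (Fin s) ℂ →ₚ[ℂ] Matrix (Fin s) (Fin s) ℂ)
    (hE : ∀ ρ, (E ρ).trace = ρ.trace)
    {R : Matrix (Fin s) (Fin s) ℂ → Matrix (Fin s) (Fin s) ℂ} (hR : IsQChannel R)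
    {σA : Matrix a a ℂ}
    (hcorr : ∀ σB : Matrix b b ℂ, σB.PosSemidef → σB.trace = 1 → ∃ τA : Matrix a a ℂ,
      τA.trace = 1 ∧ R (E (W * (σA ⊗ₖ σB) * Wᴴ)) = W * (τA ⊗ₖ σB) * Wᴴ)
    {α : a → ℂ} (hα : star α ⬝ᵥ α = 1) {p : ℝ} (hp : 0 < p)
    (hle : p • vecMulVec α (star α) ≤ σA) :
    ∃ Rα : Matrix (Fin s) (Fin s) ℂ → Matrix (Fin s) (Fin s) ℂ, IsQChannel Rα ∧
      ∀ σB : Matrix b b ℂ,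
        Rα (E (W * (vecMulVec α (star α) ⊗ₖ σB) * Wᴴ))
          = W * (vecMulVec α (star α) ⊗ₖ σB) * Wᴴ := by
  let V : Matrix (Fin s) b ℂ := W * tensorLeft b α
  have hV : Vᴴ * V = 1 := by
    rw [conjTranspose_mul, Matrix.mul_assoc, ← Matrix.mul_assoc Wᴴ, hW, Matrix.one_mul,
      conjTranspose_tensorLeft_mul_self hα]
  have hVσ (σ : Matrix b b ℂ) : W * (vecMulVec α (star α) ⊗ₖ σ) * Wᴴ = V * σ * Vᴴ := by
    simp only [V, ← tensorLeft_mul_mul_conjTranspose, conjTranspose_mul, Matrix.mul_assoc]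
  obtain ⟨T, hT, hTW⟩ := exists_reset_channel hW hV
  obtain ⟨F, hF, hFtr⟩ := (hT.comp hR).exists_positiveLinearMap
  refine ⟨T ∘ R, hT.comp hR, fun σB => ?_⟩
  rw [hVσ, ← hF]
  refine map_conj_isometry_eq (Φ := F.comp E) (fun ρ => (hFtr _).trans (hE ρ)) hV hV
    (fun ψ hψ => ⟨p, hp, W * (σA ⊗ₖ vecMulVec ψ (star ψ)) * Wᴴ, ?_, ?_⟩) σB
  · simpa only [hVσ, smul_kronecker, Matrix.mul_smul, Matrix.smul_mul] using
      conj_kronecker_mono W hle (posSemidef_vecMulVec_self_star ψ)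
  · obtain ⟨τA, hτA, hτ⟩ := hcorr _ (posSemidef_vecMulVec_self_star ψ)
      (trace_vecMulVec_star_of_unit hψ)
    change F (E _) = _
    rw [hF, Function.comp_apply, hτ, hTW, hτA, one_smul]

theorem genOQECC_implies_subspace_code_general {s : ℕ} {a b : Type*} [Fintype a] [Fintype b]
    [DecidableEq a] [DecidableEq b] {W : Matrix (Fin s) (a × b) ℂ} (hW : Wᴴ * W = 1)
    (E : Matrix (Fin s) (Fin s) ℂ →ₚ[ℂ] Matrix (Fin s) (Fin s) ℂ)
    (hE : ∀ ρ, (E ρ).trace = ρ.trace)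
    {R : Matrix (Fin s) (Fin s) ℂ → Matrix (Fin s) (Fin s) ℂ} (hR : IsQChannel R)
    {σA : Matrix a a ℂ} (hσA : σA.PosSemidef) (hne : σA ≠ 0)
    (hcorr : ∀ σB : Matrix b b ℂ, σB.PosSemidef → σB.trace = 1 → ∃ τA : Matrix a a ℂ,
      τA.trace = 1 ∧ R (E (W * (σA ⊗ₖ σB) * Wᴴ)) = W * (τA ⊗ₖ σB) * Wᴴ) :
    ∃ α : a → ℂ, star α ⬝ᵥ α = 1 ∧
      ∃ Rα : Matrix (Fin s) (Fin s) ℂ → Matrix (Fin s) (Fin s) ℂ, IsQChannel Rα ∧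
        ∀ σB : Matrix b b ℂ,
          Rα (E (W * (vecMulVec α (star α) ⊗ₖ σB) * Wᴴ))
            = W * (vecMulVec α (star α) ⊗ₖ σB) * Wᴴ := by
  obtain ⟨α, hα, p, hp, hle⟩ := exists_pos_smul_vecMulVec_le hσA hne
  exact ⟨α, hα, exists_recovery_of_smul_vecMulVec_le hW E hE hR hcorr hα hp hle⟩

/-- Every generalized operator quantum error correcting code yields a standard
subspace error correcting code of the same size: if R∘E(σ_A ⊗ σ_B) = σ_A ⊗ σ_B
for all states σ_B, then there is a unit vector |α⟩ ∈ A and a channel R_α with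
R_α∘E(|α⟩⟨α| ⊗ σ_B) = |α⟩⟨α| ⊗ σ_B for all σ_B. -/
theorem genOQECC_implies_subspace_code
    {s a b : ℕ}
    (W : Matrix (Fin s) (Fin a × Fin b) ℂ) (hW : Wᴴ * W = 1)
    (E R : Matrix (Fin s) (Fin s) ℂ → Matrix (Fin s) (Fin s) ℂ)
    (hE : IsQChannel E) (hR : IsQChannel R)
    (σA : Matrix (Fin a) (Fin a) ℂ)
    (hσA : σA.PosSemidef) (hσAtr : σA.trace = 1)
    (hcorr : ∀ σB : Matrix (Fin b) (Fin b) ℂ, σB.PosSemidef → σB.trace = 1 →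
      R (E (W * (σA ⊗ₖ σB) * Wᴴ)) = W * (σA ⊗ₖ σB) * Wᴴ) :
    ∃ α : Fin a → ℂ, star α ⬝ᵥ α = 1 ∧
      ∃ Rα : Matrix (Fin s) (Fin s) ℂ → Matrix (Fin s) (Fin s) ℂ,
        IsQChannel Rα ∧
        ∀ σB : Matrix (Fin b) (Fin b) ℂ, σB.PosSemidef → σB.trace = 1 →
          Rα (E (W * (vecMulVec α (star α) ⊗ₖ σB) * Wᴴ))
            = W * (vecMulVec α (star α) ⊗ₖ σB) * Wᴴ := by
  obtain ⟨F, rfl, hF⟩ := hE.exists_positiveLinearMap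
  obtain ⟨α, hα, Rα, hRα, h⟩ := genOQECC_implies_subspace_code_general hW F hF hR hσA
    (by rintro rfl; simp at hσAtr) fun σB hσB htr => ⟨σA, hσAtr, hcorr σB hσB htr⟩
  exact ⟨α, hα, Rα, hRα, fun σB _ _ => h σB⟩
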